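/- arXiv:2406.12287 — 3 statements merged into one kernel-verified Lean document; each statement's English description precedes it below -/
import Mathlib

section
/- The Fitting ideals of a finitely generated module over a commutative ring are independent of the chosen finite presentation: if R^{b'} → R^b → M → 0 and R^{c'} → R^c → M → 0 are two presentations, then for each j the ideal generated by the (b-j)×(b-j) minors of the first presentation matrix equals the ideal generated by the (c-j)×(c-j) minors of the second. -/
/-- The `j`-th Fitting ideal of a presentation matrix `D` of size `b × b'`:
the ideal generated by all `(b-j)×(b-j)` minors of `D`. -/
def fittingIdeal {R : Type*} [CommRing R] {b b' : ℕ}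
    (D : Matrix (Fin b) (Fin b') R) (j : ℕ) : Ideal R :=
  Ideal.span (Set.range
    (fun p : (Fin (b - j) ↪ Fin b) × (Fin (b - j) ↪ Fin b') =>
      (D.submatrix (⇑p.1) (⇑p.2)).det))

namespace FittingAux

open Matrix

variable {R : Type*} [CommRing R]

/-- Expansion of the determinant of a product along rows. -/
theorem det_mul_mem {σ τ : Type*} [Fintype σ] [DecidableEq σ] [Fintype τ] [DecidableEq τ]
    (V : Matrix σ τ R) (X : Matrix τ σ R) (I : Ideal R)
    (h : ∀ f : σ → τ, Function.Injective f → (X.submatrix f id).det ∈ I) :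
    (V * X).det ∈ I := by
  have h1 : (V * X) = fun i => ∑ k, V i k • X k := by
    ext i j
    simp [Matrix.mul_apply, Finset.sum_apply]
  have h2 : (V * X).det = (Matrix.detRowAlternating (n := σ) (R := R)).toMultilinearMap
      (fun i => ∑ k, V i k • X k) := by
    rw [h1]; rfl
  rw [h2, MultilinearMap.map_sum]
  refine Ideal.sum_mem _ fun f _ => ?_
  rw [MultilinearMap.map_smul_univ, smul_eq_mul]
  refine Ideal.mul_mem_left _ _ ?_
  change (X.submatrix f id).det ∈ I
  by_cases hf : Function.Injective f
  · exact h f hf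
  · simp only [Function.Injective, not_forall] at hf
    obtain ⟨a, b, hab, hne⟩ := hf
    rw [Matrix.det_zero_of_row_eq hne]
    · exact I.zero_mem
    · ext k; simp [hab]

theorem det_mul_mem' {σ τ : Type*} [Fintype σ] [DecidableEq σ] [Fintype τ] [DecidableEq τ]
    (X : Matrix σ τ R) (V : Matrix τ σ R) (I : Ideal R)
    (h : ∀ f : σ → τ, Function.Injective f → (X.submatrix id f).det ∈ I) :
    (X * V).det ∈ I := by
  rw [← Matrix.det_transpose, Matrix.transpose_mul]
  refine det_mul_mem _ _ _ fun f hf => ?_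
  rw [← Matrix.det_transpose]
  exact h f hf

theorem laplace_fin {ρ : Type*} (I : Ideal R) (k t : ℕ) (X : Matrix ρ (Fin (k + t)) R)
    (h : ∀ e : Fin k → ρ, (X.submatrix e (Fin.castAdd t)).det ∈ I) :
    ∀ e : Fin (k + t) → ρ, (X.submatrix e id).det ∈ I := by
  induction t with
  | zero => exact h
  | succ t ih =>
    intro e
    have := ih (X.submatrix id Fin.castSucc) h
    change (X.submatrix e id : Matrix (Fin (k + t + 1)) (Fin (k + t + 1)) R).det ∈ I
    rw [Matrix.det_succ_column _ (Fin.last (k + t))]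
    refine Ideal.sum_mem _ fun i _ => Ideal.mul_mem_left _ _ ?_
    have h3 := this (fun x => e (i.succAbove x))
    convert h3 using 2
    ext a b
    simp

theorem laplace {σ : Type*} [Fintype σ] [DecidableEq σ] (I : Ideal R) (k : ℕ)
    (X : Matrix σ σ R) (s : Fin k ↪ σ)
    (h : ∀ e : Fin k → σ, (X.submatrix e s).det ∈ I) : X.det ∈ I := by
  classical
  obtain ⟨t, ht⟩ : ∃ t, Fintype.card {x // ¬ x ∈ Set.range s} = t := ⟨_, rfl⟩
  let e1 : {x // ¬ x ∈ Set.range s} ≃ Fin t := Fintype.equivFinOfCardEq ht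
  let E : Fin (k + t) ≃ σ := finSumFinEquiv.symm.trans
    ((Equiv.sumCongr (Equiv.ofInjective s s.injective) e1.symm).trans
      (Equiv.sumCompl (fun x => x ∈ Set.range s)))
  have hE : ∀ x, E (Fin.castAdd t x) = s x := by
    intro x
    simp [E]
  rw [← Matrix.det_submatrix_equiv_self E X]
  have := laplace_fin I k t (X.submatrix id E) (fun e => by
    convert h e using 2
    ext a b
    simp [hE]) E
  exact this

variable {M : Type*} [AddCommGroup M] [Module R M]

/-- Ideal of `n`-minors of the relations between the family `m`. -/
def G {τ : Type*} [Fintype τ] (R : Type*) [CommRing R] [Module R M] (m : τ → M) (n : ℕ) : Ideal R :=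
  Ideal.span {d | ∃ (p : Fin n → τ) (v : Matrix (Fin n) τ R),
    (∀ i, ∑ t, v i t • m t = 0) ∧ d = (v.submatrix id p).det}

theorem mem_G {τ σ : Type*} [Fintype τ] [Fintype σ] [DecidableEq σ] (m : τ → M) (n : ℕ)
    (hn : Fintype.card σ = n) (p : σ → τ) (v : Matrix σ τ R)
    (hv : ∀ i, ∑ t, v i t • m t = 0) : (v.submatrix id p).det ∈ G R m n := by
  let e := (Fintype.equivFinOfCardEq hn).symm
  rw [← Matrix.det_submatrix_equiv_self e]
  exact Ideal.subset_span ⟨p ∘ e, v.submatrix e id, fun i => hv _, rfl⟩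

theorem G_equiv_le {τ τ' : Type*} [Fintype τ] [Fintype τ'] (e : τ ≃ τ') (m : τ' → M) (n : ℕ) :
    G R (m ∘ e) n ≤ G R m n := by
  refine Ideal.span_le.2 ?_
  rintro _ ⟨p, v, hv, rfl⟩
  refine Ideal.subset_span ⟨e ∘ p, v.submatrix id e.symm, fun i => ?_, ?_⟩
  · rw [← hv i]
    exact (Fintype.sum_equiv e _ _ (by simp)).symm
  · congr 1; ext; simp

theorem G_zero {τ : Type*} [Fintype τ] (m : τ → M) : G R m 0 = ⊤ := by
  rw [Ideal.eq_top_iff_one]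
  exact Ideal.subset_span ⟨Fin.elim0, fun i => i.elim0, fun i => i.elim0, by simp⟩

theorem G_le_sum {b c : ℕ} (m : Fin b → M) (m' : Fin c → M) (P : Matrix (Fin c) (Fin b) R)
    (hP : ∀ k, m' k = ∑ i, P k i • m i) (j : ℕ) :
    G R m (b - j) ≤ G R (Sum.elim m m') (b + c - j) := by
  rcases le_total j b with hj | hj
  · refine Ideal.span_le.2 ?_
    rintro _ ⟨p, v, hv, rfl⟩
    have := mem_G (R := R) (σ := Fin (b - j) ⊕ Fin c) (Sum.elim m m') (b + c - j)
      (by simp; omega) (Sum.map p id) (fromBlocks v 0 (-P) 1) (by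
        rintro (i | i)
        · simp [hv]
        · simp [hP, Matrix.one_apply])
    have h2 : (fromBlocks v 0 (-P) 1 : Matrix (Fin (b - j) ⊕ Fin c) (Fin b ⊕ Fin c) R).submatrix
        id (Sum.map p id) = fromBlocks (v.submatrix id p) 0 ((-P).submatrix id p) 1 := by
      ext (i | i) (l | l) <;> simp
    rw [h2, Matrix.det_fromBlocks_zero₁₂, Matrix.det_one, mul_one] at this
    exact this
  · have : G R (Sum.elim m m') (b + c - j) = ⊤ := by
      rw [Ideal.eq_top_iff_one]
      have hle : b + c - j ≤ c := by omega
      refine Ideal.subset_span ⟨fun i => Sum.inr (Fin.castLE hle i),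
        fun i => Sum.elim (fun a => - P (Fin.castLE hle i) a)
          (fun k => (1 : Matrix (Fin c) (Fin c) R) (Fin.castLE hle i) k), ?_, ?_⟩
      · intro i
        simp [hP, Matrix.one_apply]
      · rw [← Matrix.det_one (n := Fin (b + c - j))]
        congr 1
        ext i l
        change _ = (1 : Matrix (Fin c) (Fin c) R) (Fin.castLE hle i) (Fin.castLE hle l)
        simp [Matrix.one_apply, Fin.ext_iff]
    rw [this]; exact le_top

theorem sum_le_G {b c : ℕ} (m : Fin b → M) (m' : Fin c → M) (P : Matrix (Fin c) (Fin b) R)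
    (hP : ∀ k, m' k = ∑ i, P k i • m i) (j : ℕ) :
    G R (Sum.elim m m') (b + c - j) ≤ G R m (b - j) := by
  classical
  rcases le_total b j with hj | hj
  · rw [Nat.sub_eq_zero_of_le hj, G_zero]; exact le_top
  refine Ideal.span_le.2 ?_
  rintro _ ⟨p, v, hv, rfl⟩
  let U : Matrix (Fin b ⊕ Fin c) (Fin b ⊕ Fin c) R := fromBlocks 1 0 (-P) 1
  let U' : Matrix (Fin b ⊕ Fin c) (Fin b ⊕ Fin c) R := fromBlocks 1 0 P 1
  have hU : U' * U = 1 := by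
    simp [U, U', fromBlocks_multiply]
  have hvU : v = (v * U') * U := by rw [Matrix.mul_assoc, hU, Matrix.mul_one]
  have hw : ∀ i, ∑ a, (v * U') i (Sum.inl a) • m a = 0 := by
    intro i
    rw [← hv i]
    simp only [Matrix.mul_apply, Fintype.sum_sum_type, U', fromBlocks_apply₁₁, fromBlocks_apply₂₁,
      Sum.elim_inl, Sum.elim_inr, hP, add_smul, Finset.sum_add_distrib, Finset.sum_smul,
      Finset.smul_sum, Matrix.one_apply, smul_smul]
    congr 1
    · simp
    · rw [Finset.sum_comm]
  have hsub : v.submatrix id p = (v * U') * U.submatrix id p := by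
    conv_lhs => rw [hvU]
    rfl
  rw [hsub]
  refine det_mul_mem' _ _ _ fun f hf => ?_
  have hcard : Fintype.card (Fin (b - j)) ≤ Fintype.card {l // (f l).isLeft = true} := by
    have h1 : Fintype.card {l // ¬ (f l).isLeft = true} ≤ Fintype.card (Fin c) := by
      refine Fintype.card_le_of_injective
        (fun l => (f l.1).getRight (by simpa using l.2)) ?_
      intro x y hxy
      apply Subtype.ext
      apply hf
      have := congrArg (Sum.inr (α := Fin b)) hxy
      simpa using this
    have h2 := Fintype.card_subtype_compl (fun l => (f l).isLeft = true)
    have h3 := Fintype.card_subtype_le (fun l => (f l).isLeft = true)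
    simp only [Fintype.card_fin] at *
    omega
  obtain ⟨s⟩ := Function.Embedding.nonempty_of_card_le hcard
  refine laplace _ (b - j) _ (s.trans (Function.Embedding.subtype _)) fun e => ?_
  refine Ideal.subset_span ⟨fun x => (f (s x).1).getLeft (s x).2,
    fun i a => (v * U') (e i) (Sum.inl a), fun i => hw _, ?_⟩
  congr 1
  ext i x
  change (v * U') (e i) (f (s x).1) =
    (v * U') (e i) (Sum.inl ((f (s x).1).getLeft (s x).2))
  simp

theorem fitting_eq_G {b b' : ℕ} (D : Matrix (Fin b) (Fin b') R) (g : (Fin b → R) →ₗ[R] M)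
    (hex : LinearMap.ker g = LinearMap.range (Matrix.toLin' D)) (j : ℕ) :
    fittingIdeal D j = G R (fun i => g (Pi.single i 1)) (b - j) := by
  have hg : ∀ v : Fin b → R, ∑ i, v i • g (Pi.single i 1) = g v := by
    intro v
    conv_rhs => rw [pi_eq_sum_univ' v]
    simp [map_sum, Pi.single_apply]
  apply le_antisymm
  · refine Ideal.span_le.2 ?_
    rintro _ ⟨⟨p, q⟩, rfl⟩
    refine Ideal.subset_span ⟨p, fun i t => D t (q i), fun i => ?_, ?_⟩
    · rw [hg (fun t => D t (q i)), ← LinearMap.mem_ker, hex]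
      refine ⟨Pi.single (q i) 1, ?_⟩
      ext t; simp
    · rw [← Matrix.det_transpose]; rfl
  · refine Ideal.span_le.2 ?_
    rintro _ ⟨p, v, hv, rfl⟩
    have : ∀ i, ∃ w, Matrix.toLin' D w = v i := by
      intro i
      have h1 : v i ∈ LinearMap.ker g := by rw [LinearMap.mem_ker, ← hg]; exact hv i
      rw [hex] at h1
      exact h1
    choose w hw using this
    have h2 : v.submatrix id p = Matrix.of w * (Dᵀ.submatrix id p) := by
      ext i l
      simp only [submatrix_apply, id, ← hw i, Matrix.toLin'_apply, Matrix.mulVec, dotProduct,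
        Matrix.mul_apply, of_apply, transpose_apply, mul_comm]
    rw [h2]
    refine det_mul_mem _ _ _ fun f hf => ?_
    by_cases hp : Function.Injective p
    · refine Ideal.subset_span ⟨(⟨p, hp⟩, ⟨f, hf⟩), ?_⟩
      rw [← Matrix.det_transpose]; rfl
    · simp only [Function.Injective, not_forall] at hp
      obtain ⟨x, y, hxy, hne⟩ := hp
      rw [Matrix.det_zero_of_column_eq hne]
      · exact Ideal.zero_mem _
      · intro k; simp [hxy]

theorem fitting_le {b c : ℕ} (m : Fin b → M) (m' : Fin c → M)
    (P : Matrix (Fin c) (Fin b) R) (hP : ∀ k, m' k = ∑ i, P k i • m i)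
    (Q : Matrix (Fin b) (Fin c) R) (hQ : ∀ k, m k = ∑ i, Q k i • m' i) (j : ℕ) :
    G R m (b - j) ≤ G R m' (c - j) := by
  refine (G_le_sum m m' P hP j).trans (le_trans ?_ (sum_le_G m' m Q hQ j))
  rw [add_comm c b]
  have := G_equiv_le (R := R) (Equiv.sumComm (Fin b) (Fin c)) (Sum.elim m' m) (b + c - j)
  convert this using 2
  ext (x | x) <;> rfl

theorem exists_coeff {b c : ℕ} (g : (Fin b → R) →ₗ[R] M) (hg : Function.Surjective g)
    (m' : Fin c → M) : ∃ P : Matrix (Fin c) (Fin b) R,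
      ∀ k, m' k = ∑ i, P k i • g (Pi.single i 1) := by
  choose P hP using fun k => hg (m' k)
  refine ⟨P, fun k => ?_⟩
  rw [← hP k]
  conv_lhs => rw [pi_eq_sum_univ' (P k)]
  simp [map_sum, Pi.single_apply]

end FittingAux

/-- the Fitting ideals of a finitely generated module over a
commutative ring are independent of the chosen finite presentation:
if `R^{b'} --D₁--> R^b --g₁--> M → 0` and `R^{c'} --D₂--> R^c --g₂--> M → 0`
are two presentations, then for each `j` the ideal of `(b-j)×(b-j)` minors of
`D₁` equals the ideal of `(c-j)×(c-j)` minors of `D₂`. -/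
theorem fittingIdeal_independent {R : Type*} [CommRing R]
    {M : Type*} [AddCommGroup M] [Module R M]
    (b b' c c' : ℕ)
    (D₁ : Matrix (Fin b) (Fin b') R) (D₂ : Matrix (Fin c) (Fin c') R)
    (g₁ : (Fin b → R) →ₗ[R] M) (g₂ : (Fin c → R) →ₗ[R] M)
    (hg₁ : Function.Surjective g₁) (hg₂ : Function.Surjective g₂)
    (hex₁ : LinearMap.ker g₁ = LinearMap.range (Matrix.toLin' D₁))
    (hex₂ : LinearMap.ker g₂ = LinearMap.range (Matrix.toLin' D₂)) :
    ∀ j : ℕ, fittingIdeal D₁ j = fittingIdeal D₂ j := by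
  intro j
  obtain ⟨P, hP⟩ := FittingAux.exists_coeff g₁ hg₁ (fun i => g₂ (Pi.single i 1))
  obtain ⟨Q, hQ⟩ := FittingAux.exists_coeff g₂ hg₂ (fun i => g₁ (Pi.single i 1))
  rw [FittingAux.fitting_eq_G D₁ g₁ hex₁, FittingAux.fitting_eq_G D₂ g₂ hex₂]
  exact le_antisymm (FittingAux.fitting_le _ _ P hP Q hQ j)
    (FittingAux.fitting_le _ _ Q hQ P hP j)
end

section
/- Let M be a finitely generated torsion module over R = ℤ[t,t^{-1}], and let M' = ⊕_{j=0}^k R/(Δ^j(M)/Δ^{j+1}(M)), where Δ^j(M) = 1 for j > k. Then Δ^j(M') = Δ^j(M) for all j ≥ 0. -/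
/-- `Δ^j`: the gcd of all `(b-j)×(b-j)` minors of the `b × b'` presentation
matrix (over a UFD/GCD domain `R`, standing for `ℤ[t,t⁻¹]`). -/
noncomputable def deltaGCD {R : Type*} [CommRing R] [IsDomain R] [NormalizedGCDMonoid R]
    {b b' : ℕ} (A : Matrix (Fin b) (Fin b') R) (j : ℕ) : R :=
  Finset.univ.gcd
    (fun p : (Fin (b - j) ↪ Fin b) × (Fin (b - j) ↪ Fin b') =>
      (A.submatrix (⇑p.1) (⇑p.2)).det)

open Polynomial in
theorem aux_det_expand {S : Type*} [CommRing S] {n b b' : ℕ} (U : Matrix (Fin n) (Fin b) S)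
    (A : Matrix (Fin b) (Fin b') S) (V : Matrix (Fin b') (Fin n) S) :
    (U * A * V).det = ∑ f : Fin n → Fin b, ∑ g : Fin n → Fin b',
      (∏ a, U a (f a)) * (∏ a, V (g a) a) * (A.submatrix f g).det := by
  have key : ∀ {n b : ℕ} (U : Matrix (Fin n) (Fin b) S) (B : Matrix (Fin b) (Fin n) S),
      (U * B).det = ∑ f : Fin n → Fin b, (∏ a, U a (f a)) * (B.submatrix f id).det := by
    intro n b U B
    have h := (Matrix.detRowAlternating (n := Fin n) (R := S)).toMultilinearMap.map_sum
      (fun (a : Fin n) (i : Fin b) => U a i • B i)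
    have h2 : (U * B).det = (Matrix.detRowAlternating (n := Fin n) (R := S)).toMultilinearMap
        (fun a => ∑ i, U a i • B i) := by
      change Matrix.det _ = Matrix.det _
      congr 1
      ext a c
      simp [Matrix.mul_apply, Finset.sum_apply]
    rw [h2, h]
    refine Finset.sum_congr rfl fun f _ => ?_
    rw [MultilinearMap.map_smul_univ]
    rfl
  rw [Matrix.mul_assoc, key]
  refine Finset.sum_congr rfl fun f _ => ?_
  have h3 : ((A * V).submatrix f id).det = (V.transpose * (A.submatrix f id).transpose).det := by
    rw [← Matrix.transpose_mul, Matrix.det_transpose]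
    rfl
  rw [h3, key, Finset.mul_sum]
  refine Finset.sum_congr rfl fun g _ => ?_
  rw [mul_assoc, ← Matrix.det_transpose (A.submatrix f g)]
  rfl

theorem aux_jacobi {S : Type*} [CommRing S] [IsDomain S] {s : ℕ}
    (M : Matrix (Fin s ⊕ Fin 2) (Fin s ⊕ Fin 2) S) (d : S)
    (hd : ∀ i j, d ∣ M.adjugate i j) : d ^ 2 ∣ M.det * M.toBlocks₁₁.det := by
  by_cases h0 : M.det = 0
  · simp [h0]
  choose K hK using hd
  let P : Matrix (Fin s) (Fin 2) S := Matrix.of fun i j => K (Sum.inl i) (Sum.inr j)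
  let Q : Matrix (Fin 2) (Fin 2) S := Matrix.of fun i j => K (Sum.inr i) (Sum.inr j)
  let N : Matrix (Fin s ⊕ Fin 2) (Fin s ⊕ Fin 2) S := Matrix.fromBlocks 1 (d • P) 0 (d • Q)
  have hN : N.det = d ^ 2 * Q.det := by
    simp [N, Matrix.det_fromBlocks_zero₂₁, Matrix.det_smul]
  have hcol : ∀ i j, N i (Sum.inr j) = M.adjugate i (Sum.inr j) := by
    rintro (i | i) j <;> simp [N, P, Q, hK]
  have hMN : M * N = Matrix.fromBlocks M.toBlocks₁₁ 0 M.toBlocks₂₁ (M.det • 1) := by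
    ext i j
    rcases j with j | j
    · rcases i with i | i <;>
      simp [Matrix.mul_apply, N, Matrix.one_apply, Matrix.toBlocks₁₁, Matrix.toBlocks₂₁]
    · have : (M * N) i (Sum.inr j) = (M * M.adjugate) i (Sum.inr j) := by
        simp only [Matrix.mul_apply, hcol]
      rw [this, Matrix.mul_adjugate]
      rcases i with i | i <;> simp [Matrix.one_apply]
  have h := congrArg Matrix.det hMN
  rw [Matrix.det_mul, hN, Matrix.det_fromBlocks_zero₁₂, Matrix.det_smul, Matrix.det_one] at h
  refine ⟨Q.det, mul_left_cancel₀ h0 ?_⟩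
  rw [h]
  simp
  ring

theorem aux_jacobi_fin {S : Type*} [CommRing S] [IsDomain S] {s : ℕ}
    (M : Matrix (Fin (s + 2)) (Fin (s + 2)) S) (d : S)
    (hd : ∀ p q : Fin (s + 1) → Fin (s + 2), d ∣ (M.submatrix p q).det) :
    d ^ 2 ∣ M.det * (M.submatrix (Fin.castAdd 2) (Fin.castAdd 2)).det := by
  have h := aux_jacobi (M.submatrix (finSumFinEquiv (m := s) (n := 2)) finSumFinEquiv) d (by
    intro i j
    rw [Matrix.adjugate_submatrix_equiv_self]
    simp only [Matrix.submatrix_apply]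
    rw [Matrix.adjugate_fin_succ_eq_det_submatrix]
    exact Dvd.dvd.mul_left (hd _ _) _)
  rw [Matrix.det_submatrix_equiv_self] at h
  exact h

open Polynomial in
theorem aux_content {R : Type*} [CommRing R] [IsDomain R] [NormalizedGCDMonoid R]
    {b b' : ℕ} (A : Matrix (Fin b) (Fin b') R) (hb : 0 < b) (n N : ℕ) (hn : n ≤ N)
    (U : Matrix (Fin n) (Fin b) R[X]) (hU : ∀ a i, U a i = X ^ ((i : ℕ) * b ^ (a : ℕ)))
    (V : Matrix (Fin b') (Fin n) R[X])
    (hV : ∀ i a, V i a = X ^ (b ^ N * ((i : ℕ) * b' ^ (a : ℕ))))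
    (f : Fin n → Fin b) (g : Fin n → Fin b') :
    (U * A.map C * V).det.content ∣ (A.submatrix f g).det := by
  have hexp : (U * A.map C * V).det = ∑ f : Fin n → Fin b, ∑ g : Fin n → Fin b',
      C (A.submatrix f g).det * X ^ ((finFunctionFinEquiv f : ℕ) +
        b ^ N * (finFunctionFinEquiv g : ℕ)) := by
    rw [aux_det_expand]
    refine Finset.sum_congr rfl fun f _ => Finset.sum_congr rfl fun g _ => ?_
    simp only [hU, hV, Finset.prod_pow_eq_pow_sum, ← Finset.mul_sum, finFunctionFinEquiv_apply]
    rw [pow_add, mul_comm]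
    congr 1
    rw [RingHom.map_det]
    rfl
  have hc := Polynomial.content_dvd_coeff (p := (U * A.map C * V).det)
    ((finFunctionFinEquiv f : ℕ) + b ^ N * (finFunctionFinEquiv g : ℕ))
  have hlt : ∀ f : Fin n → Fin b, (finFunctionFinEquiv f : ℕ) < b ^ N := fun f =>
    (finFunctionFinEquiv f).2.trans_le (Nat.pow_le_pow_right hb hn)
  have hBpos : 0 < b ^ N := pow_pos hb N
  have hinj : ∀ f' g', ((finFunctionFinEquiv f : ℕ) + b ^ N * (finFunctionFinEquiv g : ℕ) =
      (finFunctionFinEquiv f' : ℕ) + b ^ N * (finFunctionFinEquiv g' : ℕ)) → f' = f ∧ g' = g := by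
    intro f' g' h
    have h1 := congrArg (· % b ^ N) h
    have h2 := congrArg (· / b ^ N) h
    simp only [Nat.add_mul_mod_self_left, Nat.mod_eq_of_lt (hlt _)] at h1
    simp only [Nat.add_mul_div_left _ _ hBpos, Nat.div_eq_of_lt (hlt _), zero_add] at h2
    exact ⟨(finFunctionFinEquiv.injective (Fin.ext h1)).symm,
      (finFunctionFinEquiv.injective (Fin.ext h2)).symm⟩
  rw [hexp] at hc ⊢
  convert hc using 1
  simp only [finsetSum_coeff, coeff_C_mul, coeff_X_pow]
  rw [Finset.sum_eq_single f, Finset.sum_eq_single g]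
  · simp
  · intro g' _ hg'
    rw [if_neg, mul_zero]
    exact fun h => hg' (hinj _ _ h).2
  · simp
  · intro f' _ hf'
    refine Finset.sum_eq_zero fun g' _ => ?_
    rw [if_neg, mul_zero]
    exact fun h => hf' (hinj _ _ h).1
  · simp

/-- gcd of the `n × n` minors -/
noncomputable def auxMinorGCD {R : Type*} [CommRing R] [IsDomain R] [NormalizedGCDMonoid R]
    {b b' : ℕ} (A : Matrix (Fin b) (Fin b') R) (n : ℕ) : R :=
  Finset.univ.gcd
    (fun p : (Fin n ↪ Fin b) × (Fin n ↪ Fin b') => (A.submatrix (⇑p.1) (⇑p.2)).det)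

theorem auxMinorGCD_dvd {R : Type*} [CommRing R] [IsDomain R] [NormalizedGCDMonoid R]
    {b b' : ℕ} (A : Matrix (Fin b) (Fin b') R) (n : ℕ) (f : Fin n → Fin b) (g : Fin n → Fin b') :
    auxMinorGCD A n ∣ (A.submatrix f g).det := by
  by_cases hf : Function.Injective f
  · by_cases hg : Function.Injective g
    · exact Finset.gcd_dvd (f := fun p : (Fin n ↪ Fin b) × (Fin n ↪ Fin b') =>
        (A.submatrix (⇑p.1) (⇑p.2)).det) (Finset.mem_univ ((⟨f, hf⟩, ⟨g, hg⟩) : _ × _))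
    · simp only [Function.Injective, not_forall] at hg
      obtain ⟨i, j, hij, hne⟩ := hg
      rw [Matrix.det_zero_of_column_eq hne (by intro k; simp [hij])]
      exact dvd_zero _
  · simp only [Function.Injective, not_forall] at hf
    obtain ⟨i, j, hij, hne⟩ := hf
    rw [Matrix.det_zero_of_row_eq hne (by ext k; simp [hij])]
    exact dvd_zero _

open Polynomial in
theorem auxMinorGCD_sq {R : Type*} [CommRing R] [IsDomain R] [NormalizedGCDMonoid R]
    {b b' : ℕ} (A : Matrix (Fin b) (Fin b') R) (hb : 0 < b) (s : ℕ) :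
    auxMinorGCD A (s + 1) ^ 2 ∣ auxMinorGCD A (s + 2) * auxMinorGCD A s := by
  let U : Matrix (Fin (s + 2)) (Fin b) R[X] := Matrix.of fun a i => X ^ ((i : ℕ) * b ^ (a : ℕ))
  let V : Matrix (Fin b') (Fin (s + 2)) R[X] :=
    Matrix.of fun i a => X ^ (b ^ (s + 2) * ((i : ℕ) * b' ^ (a : ℕ)))
  set d := auxMinorGCD A (s + 1) with hd
  have h1 := aux_jacobi_fin (U * A.map C * V) (C d) (by
    intro p q
    have : (U * A.map C * V).submatrix p q
        = (U.submatrix p id) * A.map C * (V.submatrix id q) := by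
      ext i j
      simp [Matrix.mul_apply]
    rw [this, aux_det_expand]
    refine Finset.dvd_sum fun f _ => Finset.dvd_sum fun g _ => Dvd.dvd.mul_left ?_ _
    have h2 : ((A.map C).submatrix f g).det = C (A.submatrix f g).det := by
      rw [RingHom.map_det]; rfl
    rw [h2]
    exact map_dvd C (auxMinorGCD_dvd A _ f g))
  have h3 : (U * A.map C * V).submatrix (Fin.castAdd 2) (Fin.castAdd 2)
        = (U.submatrix (Fin.castAdd 2) id) * A.map C * (V.submatrix id (Fin.castAdd 2)) := by
    ext i j
    simp [Matrix.mul_apply]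
  rw [h3, ← C_pow, C_dvd_iff_dvd_coeff, ← Polynomial.dvd_content_iff_C_dvd.trans
    (C_dvd_iff_dvd_coeff _ _)] at h1
  replace h1 := h1.trans (Polynomial.associated_content_mul _ _).dvd
  refine h1.trans (mul_dvd_mul ?_ ?_)
  · refine Finset.dvd_gcd fun p _ => ?_
    exact aux_content A hb (s + 2) (s + 2) le_rfl U (fun _ _ => rfl) V (fun _ _ => rfl) _ _
  · refine Finset.dvd_gcd fun p _ => ?_
    exact aux_content A hb s (s + 2) (by omega) _ (fun _ _ => rfl) _ (fun _ _ => rfl) _ _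

theorem auxMinorGCD_zero {R : Type*} [CommRing R] [IsDomain R] [NormalizedGCDMonoid R]
    {b b' : ℕ} (A : Matrix (Fin b) (Fin b') R) : auxMinorGCD A 0 = 1 := by
  have h : auxMinorGCD A 0 ∣ 1 := by
    have := auxMinorGCD_dvd A 0 Fin.elim0 Fin.elim0
    simpa using this
  have h2 : normalize (auxMinorGCD A 0) = auxMinorGCD A 0 := Finset.normalize_gcd
  rw [← h2]
  exact normalize_eq_one.2 (isUnit_of_dvd_one h)

theorem aux_prod_dvd {R : Type*} [CommRing R] (Q : ℕ → R) (hQ : ∀ i, Q (i + 1) ∣ Q i)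
    (m : ℕ) : ∀ S : Finset ℕ, S ⊆ Finset.range m →
      ∏ i ∈ Finset.range S.card, Q (m - S.card + i) ∣ ∏ i ∈ S, Q i := by
  induction m with
  | zero =>
    intro S hS
    have : S = ∅ := by simpa using hS
    simp [this]
  | succ m ih =>
    intro S hS
    by_cases hm : m ∈ S
    · have hsub : S.erase m ⊆ Finset.range m := by
        intro x hx
        have h1 := hS (Finset.mem_of_mem_erase hx)
        have h2 := Finset.ne_of_mem_erase hx
        simp only [Finset.mem_range] at *
        omega
      have hcard : S.card = (S.erase m).card + 1 := (Finset.card_erase_add_one hm).symm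
      have hle : (S.erase m).card ≤ m := by simpa using Finset.card_le_card hsub
      rw [← Finset.prod_erase_mul S Q hm, hcard, Finset.prod_range_succ]
      have := ih _ hsub
      refine mul_dvd_mul ?_ ?_
      · convert this using 4
        omega
      · rw [show m + 1 - ((S.erase m).card + 1) + (S.erase m).card = m by omega]
    · have hsub : S ⊆ Finset.range m := by
        intro x hx
        have h1 := hS hx
        have h2 : x ≠ m := fun h => hm (h ▸ hx)
        simp only [Finset.mem_range] at *
        omega
      have hle : S.card ≤ m := by simpa using Finset.card_le_card hsub
      refine dvd_trans (Finset.prod_dvd_prod_of_dvd _ _ fun i _ => ?_) (ih S hsub)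
      rw [show m + 1 - S.card + i = (m - S.card + i) + 1 by omega]
      exact hQ _

/-- let `M` be a finitely generated torsion module over the GCD
domain `R` (standing for `ℤ[t,t⁻¹]`), presented by `R^{b'} --D--> R^b → M → 0`,
with `Δ^j(M) = 1` for `j > k` and `q j = Δ^j(M)/Δ^{j+1}(M)` the successive
quotients.  Then the module `M' = ⊕_{j=0}^k R/(q j)`, presented by the diagonal
matrix `diag(q 0, …, q k)`, has the same invariants: `Δ^j(M') = Δ^j(M)` for all
`j ≥ 0`. -/
theorem deltaGCD_cyclic_decomposition {R : Type*} [CommRing R] [IsDomain R]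
    [NormalizedGCDMonoid R] {M : Type*} [AddCommGroup M] [Module R M]
    (htors : ∀ x : M, ∃ f : R, f ≠ 0 ∧ f • x = 0)
    (b b' : ℕ) (D : Matrix (Fin b) (Fin b') R)
    (g : (Fin b → R) →ₗ[R] M) (hg : Function.Surjective g)
    (hexact : LinearMap.ker g = LinearMap.range (Matrix.toLin' D))
    (k : ℕ) (hk : ∀ j : ℕ, k < j → deltaGCD D j = 1)
    (q : Fin (k + 1) → R)
    (hq : ∀ j : Fin (k + 1), deltaGCD D (j : ℕ) = q j * deltaGCD D ((j : ℕ) + 1)) :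
    ∀ j : ℕ, deltaGCD (Matrix.diagonal q) j = deltaGCD D j := by
  have hΔ : ∀ {c c' : ℕ} (A : Matrix (Fin c) (Fin c') R) (j : ℕ),
      deltaGCD A j = auxMinorGCD A (c - j) := fun A j => rfl
  -- nonvanishing
  have h0 : deltaGCD D 0 ≠ 0 := by
    intro hzero
    have hx : ∀ i : Fin b, ∃ f : R, f ≠ 0 ∧ ∃ v : Fin b' → R, D.mulVec v = Pi.single i f := by
      intro i
      obtain ⟨f, hf, hfx⟩ := htors (g (Pi.single i 1))
      refine ⟨f, hf, ?_⟩
      have hmem : f • (Pi.single i 1 : Fin b → R) ∈ LinearMap.ker g := by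
        rw [LinearMap.mem_ker, map_smul, hfx]
      rw [hexact] at hmem
      obtain ⟨v, hv⟩ := hmem
      refine ⟨v, ?_⟩
      rw [Matrix.toLin'_apply] at hv
      rw [hv, ← Pi.single_smul]
      simp
    choose f hf v hv using hx
    have hdet : ((1 : Matrix (Fin b) (Fin b) R) * D * (Matrix.of v).transpose).det = ∏ i, f i := by
      rw [← Matrix.det_diagonal]
      congr 1
      ext i j
      have := congrFun (hv j) i
      rw [Matrix.one_mul, Matrix.mul_apply]
      simp only [Matrix.mulVec, dotProduct] at this
      simp only [Matrix.transpose_apply, Matrix.of_apply]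
      rw [this, Matrix.diagonal_apply, Pi.single_apply]
      by_cases h : i = j <;> simp [h]
    rw [aux_det_expand] at hdet
    have hz : ∏ i, f i = 0 := by
      rw [← hdet]
      refine Finset.sum_eq_zero fun p _ => Finset.sum_eq_zero fun r _ => ?_
      have h1 := auxMinorGCD_dvd D b p r
      have h2 : auxMinorGCD D b = 0 := hzero
      rw [h2, zero_dvd_iff] at h1
      rw [h1, mul_zero]
    exact (Finset.prod_ne_zero_iff.2 fun i _ => hf i) hz
  let Q : ℕ → R := fun i => if h : i < k + 1 then q ⟨i, h⟩ else 1
  have hQq : ∀ i : Fin (k + 1), Q i = q i := fun i => dif_pos i.2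
  have hQ : ∀ j, deltaGCD D j = Q j * deltaGCD D (j + 1) := by
    intro j
    by_cases h : j < k + 1
    · have e : Q j = q ⟨j, h⟩ := dif_pos h
      rw [e]
      exact hq ⟨j, h⟩
    · have e : Q j = 1 := dif_neg h
      rw [e, hk j (by omega), hk (j + 1) (by omega), mul_one]
  have hne : ∀ j, deltaGCD D j ≠ 0 := by
    intro j
    induction j with
    | zero => exact h0
    | succ j ih =>
      intro h
      exact ih (by rw [hQ j, h, mul_zero])
  have hsq : ∀ j, deltaGCD D (j + 1) ^ 2 ∣ deltaGCD D j * deltaGCD D (j + 2) := by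
    intro j
    by_cases hj : j + 2 ≤ b
    · obtain ⟨s, rfl⟩ := Nat.exists_eq_add_of_le hj
      have := auxMinorGCD_sq D (by omega) s
      rw [hΔ, hΔ, hΔ]
      rw [show j + 2 + s - (j + 1) = s + 1 by omega, show j + 2 + s - j = s + 2 by omega,
        show j + 2 + s - (j + 2) = s by omega]
      exact this
    · rw [hΔ D (j + 1), show b - (j + 1) = 0 by omega, auxMinorGCD_zero]
      simp
  have hQdvd : ∀ i, Q (i + 1) ∣ Q i := by
    intro j
    have h := hsq j
    have e1 : deltaGCD D (j + 1) ^ 2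
        = Q (j + 1) * (deltaGCD D (j + 2) * deltaGCD D (j + 1)) := by
      rw [pow_two]
      nth_rewrite 1 [hQ (j + 1)]
      ring
    have e2 : deltaGCD D j * deltaGCD D (j + 2)
        = Q j * (deltaGCD D (j + 2) * deltaGCD D (j + 1)) := by
      rw [hQ j]; ring
    rw [e1, e2] at h
    exact (mul_dvd_mul_iff_right (mul_ne_zero (hne _) (hne _))).1 h
  have htel : ∀ n j, deltaGCD D j = (∏ i ∈ Finset.range n, Q (j + i)) * deltaGCD D (j + n) := by
    intro n j
    induction n with
    | zero => simp
    | succ n ih =>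
      rw [ih, Finset.prod_range_succ, hQ (j + n)]
      ring_nf
  intro j
  by_cases hj : k < j
  · rw [hk j hj, hΔ, show k + 1 - j = 0 by omega, auxMinorGCD_zero]
  have hprod : deltaGCD D j = ∏ i ∈ Finset.range (k + 1 - j), Q (j + i) := by
    rw [htel (k + 1 - j) j, hk (j + (k + 1 - j)) (by omega), mul_one]
  refine dvd_antisymm_of_normalize_eq Finset.normalize_gcd Finset.normalize_gcd ?_ ?_
  · rw [hprod, hΔ]
    let f : Fin (k + 1 - j) → Fin (k + 1) := fun i => ⟨j + i, by omega⟩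
    have hf : Function.Injective f := by
      intro x y hxy
      simp only [f, Fin.mk.injEq] at hxy
      exact Fin.ext (by omega)
    have h1 := auxMinorGCD_dvd (Matrix.diagonal q) (k + 1 - j) f f
    rw [Matrix.submatrix_diagonal _ _ hf, Matrix.det_diagonal] at h1
    rw [← Fin.prod_univ_eq_prod_range (fun i => Q (j + i))]
    convert h1 using 2 with i
    exact hQq (f i)
  · refine Finset.dvd_gcd fun p _ => ?_
    rw [hprod, Matrix.det_apply]
    refine Finset.dvd_sum fun σ _ => ?_
    rw [Units.smul_def, zsmul_eq_mul]
    refine Dvd.dvd.mul_left ?_ _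
    by_cases hσ : ∀ i, p.1 (σ i) = p.2 i
    · let e : Fin (k + 1 - j) ↪ ℕ := p.2.trans Fin.valEmbedding
      have h1 := aux_prod_dvd Q hQdvd (k + 1) (Finset.univ.map e) (by
        intro x hx
        simp only [Finset.mem_map, Finset.mem_univ, true_and] at hx
        obtain ⟨i, rfl⟩ := hx
        simpa [e] using (p.2 i).2)
      rw [Finset.prod_map, Finset.card_map, Finset.card_univ, Fintype.card_fin,
        show k + 1 - (k + 1 - j) = j by omega] at h1
      convert h1 using 2 with i
      simp [hσ, e, hQq]
    · simp only [not_forall] at hσ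
      obtain ⟨i, hi⟩ := hσ
      rw [Finset.prod_eq_zero (Finset.mem_univ i)]
      · exact dvd_zero _
      · simp [hi]
end

section
/- Let M be a finitely generated module over R = ℤ[t,t^{-1}] of rank r (i.e., dim over Frac(R) of M ⊗ Frac(R) equals r). Then Δ^j(M) = 0 for j < r, and Δ^j(M) = Δ^{j-r}(Tor(M)) for j ≥ r, where Tor(M) = {x ∈ M : fx = 0 for some nonzero f ∈ R}. -/
open TensorProduct

namespace FitAux
open Matrix

variable {R : Type*} [CommRing R]

/-- The ideal generated by the `k × k` minors. -/
def minorIdeal {m n : Type*} (A : Matrix m n R) (k : ℕ) : Ideal R :=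
  Ideal.span (Set.range fun p : (Fin k → m) × (Fin k → n) => (A.submatrix p.1 p.2).det)

lemma det_mem {m n : Type*} (A : Matrix m n R) {k : ℕ} (e : Fin k → m) (f : Fin k → n) :
    (A.submatrix e f).det ∈ minorIdeal A k :=
  Ideal.subset_span ⟨(e, f), rfl⟩

lemma minorIdeal_le {m n : Type*} {A : Matrix m n R} {k : ℕ} {I : Ideal R}
    (h : ∀ (e : Fin k → m) (f : Fin k → n), (A.submatrix e f).det ∈ I) :
    minorIdeal A k ≤ I := by
  refine Ideal.span_le.2 ?_
  rintro _ ⟨p, rfl⟩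
  exact h p.1 p.2

lemma minorIdeal_zero {m n : Type*} (A : Matrix m n R) : minorIdeal A 0 = ⊤ := by
  rw [Ideal.eq_top_iff_one]
  have := det_mem A (k := 0) Fin.elim0 Fin.elim0
  simpa using this

lemma minorIdeal_submatrix {m n m' n' : Type*} (A : Matrix m n R) (a : m' → m) (b : n' → n)
    (k : ℕ) : minorIdeal (A.submatrix a b) k ≤ minorIdeal A k :=
  minorIdeal_le fun e f => by
    rw [Matrix.submatrix_submatrix]
    exact det_mem _ _ _

lemma minorIdeal_transpose {m n : Type*} (A : Matrix m n R) (k : ℕ) :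
    minorIdeal Aᵀ k ≤ minorIdeal A k :=
  minorIdeal_le fun e f => by
    rw [← Matrix.det_transpose, Matrix.transpose_submatrix, Matrix.transpose_transpose]
    exact det_mem _ _ _

lemma minorIdeal_mul_left {l m n : Type*} [Fintype m] (X : Matrix l m R) (A : Matrix m n R)
    (k : ℕ) : minorIdeal (X * A) k ≤ minorIdeal A k := by
  classical
  refine minorIdeal_le fun e f => ?_
  have h1 : ((X * A).submatrix e f).det =
      (Matrix.detRowAlternating : (Fin k → R) [⋀^Fin k]→ₗ[R] R).toMultilinearMap
        (fun i => ∑ j : m, X (e i) j • (fun c => A j (f c))) := by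
    change Matrix.detRowAlternating _ = Matrix.detRowAlternating _
    congr 1
    ext i c
    simp [Matrix.mul_apply]
  rw [h1, MultilinearMap.map_sum]
  refine Ideal.sum_mem _ fun h _ => ?_
  rw [MultilinearMap.map_smul_univ]
  exact Ideal.mul_mem_left _ _ (det_mem A h f)

lemma minorIdeal_mul_right {l m n : Type*} [Fintype m] (A : Matrix l m R) (X : Matrix m n R)
    (k : ℕ) : minorIdeal (A * X) k ≤ minorIdeal A k := by
  have h := minorIdeal_transpose (A * X)ᵀ k
  rw [Matrix.transpose_transpose, Matrix.transpose_mul] at h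
  exact h.trans ((minorIdeal_mul_left _ _ _).trans (minorIdeal_transpose _ _))

lemma minorIdeal_succ {m n : Type*} (A : Matrix m n R) (k : ℕ) :
    minorIdeal A (k + 1) ≤ minorIdeal A k := by
  refine minorIdeal_le fun e f => ?_
  rw [Matrix.det_succ_row_zero]
  refine Ideal.sum_mem _ fun j _ => Ideal.mul_mem_left _ _ ?_
  rw [Matrix.submatrix_submatrix]
  exact det_mem _ _ _

lemma minorIdeal_anti {m n : Type*} (A : Matrix m n R) : Antitone (minorIdeal A) :=
  antitone_nat_of_succ_le (minorIdeal_succ A)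

/-- `A ⊕ 1`. -/
def ext1 {m n : Type*} (A : Matrix m n R) : Matrix (Option m) (Option n) R
  | some i, some j => A i j
  | none, none => 1
  | some _, none => 0
  | none, some _ => 0

lemma minor_some_mem {m n : Type*} (A : Matrix m n R) (k : ℕ)
    (e : Fin k → Option m) (f : Fin k → Option n) (he : ∀ i, e i ≠ none) :
    ((ext1 A).submatrix e f).det ∈ minorIdeal A k := by
  by_cases hf : ∀ i, f i ≠ none
  · have h1 : ∀ i, ∃ a, e i = some a := fun i => Option.ne_none_iff_exists'.1 (he i)
    have h2 : ∀ i, ∃ a, f i = some a := fun i => Option.ne_none_iff_exists'.1 (hf i)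
    choose e' he' using h1
    choose f' hf' using h2
    have : (ext1 A).submatrix e f = A.submatrix e' f' := by
      ext i j
      simp [he', hf', ext1]
    rw [this]
    exact det_mem _ _ _
  · push Not at hf
    obtain ⟨j, hj⟩ := hf
    rw [Matrix.det_eq_zero_of_column_eq_zero j]
    · exact Ideal.zero_mem _
    · intro i
      obtain ⟨a, ha⟩ := Option.ne_none_iff_exists'.1 (he i)
      simp [ha, hj, ext1]

lemma minorIdeal_ext1 {m n : Type*} (A : Matrix m n R) (k : ℕ) :
    minorIdeal (ext1 A) (k + 1) ≤ minorIdeal A k := by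
  refine minorIdeal_le fun e f => ?_
  by_cases hinj : Function.Injective e
  · have key : ∃ i, ∀ i', e (Fin.succAbove i i') ≠ none := by
      by_cases h : ∃ i, e i = none
      · obtain ⟨i, hi⟩ := h
        refine ⟨i, fun i' h' => ?_⟩
        exact Fin.succAbove_ne i i' (hinj (h'.trans hi.symm))
      · push Not at h
        exact ⟨0, fun i' => h _⟩
    obtain ⟨i, hi⟩ := key
    rw [Matrix.det_succ_row _ i]
    refine Ideal.sum_mem _ fun j _ => Ideal.mul_mem_left _ _ ?_
    rw [Matrix.submatrix_submatrix]
    exact minor_some_mem _ _ _ _ hi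
  · simp only [Function.Injective] at hinj
    push Not at hinj
    obtain ⟨i, j, hij, hne⟩ := hinj
    rw [Matrix.det_zero_of_row_eq hne]
    · exact Ideal.zero_mem _
    · ext c
      simp [hij]

lemma minorIdeal_block_le {m n : Type*} (A : Matrix m n R) (c k : ℕ) :
    minorIdeal (Matrix.fromBlocks A 0 0 (1 : Matrix (Fin c) (Fin c) R)) (k + c) ≤
      minorIdeal A k := by
  induction c with
  | zero =>
    have : Matrix.fromBlocks A 0 0 (1 : Matrix (Fin 0) (Fin 0) R) =
        A.submatrix (Sum.elim id Fin.elim0) (Sum.elim id Fin.elim0) := by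
      ext i j
      rcases i with i | i
      · rcases j with j | j
        · simp
        · exact j.elim0
      · exact i.elim0
    rw [this]
    exact minorIdeal_submatrix _ _ _ _
  | succ c ih =>
    have : Matrix.fromBlocks A 0 0 (1 : Matrix (Fin (c + 1)) (Fin (c + 1)) R) =
        (ext1 (Matrix.fromBlocks A 0 0 (1 : Matrix (Fin c) (Fin c) R))).submatrix
          (Sum.elim (fun i => some (Sum.inl i)) (Fin.cons none fun i => some (Sum.inr i)))
          (Sum.elim (fun i => some (Sum.inl i)) (Fin.cons none fun i => some (Sum.inr i))) := by
      ext i j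
      rcases i with i | i
      · rcases j with j | j
        · simp [ext1]
        · refine Fin.cases ?_ (fun j => ?_) j <;> simp [ext1]
      · rcases j with j | j
        · refine Fin.cases ?_ (fun j => ?_) i <;> simp [ext1]
        · refine Fin.cases ?_ (fun i => ?_) i <;> refine Fin.cases ?_ (fun j => ?_) j <;>
            simp [ext1, Matrix.one_apply, Fin.succ_ne_zero, eq_comm]
    rw [this]
    exact (minorIdeal_submatrix _ _ _ _).trans ((minorIdeal_ext1 _ (k + c)).trans ih)

lemma le_minorIdeal_block {m n : Type*} (A : Matrix m n R) (c k : ℕ) :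
    minorIdeal A k ≤
      minorIdeal (Matrix.fromBlocks A 0 0 (1 : Matrix (Fin c) (Fin c) R)) (k + c) := by
  refine minorIdeal_le fun e f => ?_
  have h := det_mem (Matrix.fromBlocks A 0 0 (1 : Matrix (Fin c) (Fin c) R))
    (Sum.map e id ∘ finSumFinEquiv.symm : Fin (k + c) → _)
    (Sum.map f id ∘ finSumFinEquiv.symm : Fin (k + c) → _)
  rw [← Matrix.submatrix_submatrix, Matrix.det_submatrix_equiv_self] at h
  have h2 : (Matrix.fromBlocks A 0 0 (1 : Matrix (Fin c) (Fin c) R)).submatrix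
      (Sum.map e id) (Sum.map f id) = Matrix.fromBlocks (A.submatrix e f) 0 0 1 := by
    ext i j
    rcases i with i | i <;> rcases j with j | j <;> simp
  rw [h2, Matrix.det_fromBlocks_zero₂₁, Matrix.det_one, mul_one] at h
  exact h

/-- Half of the invariance of Fitting ideals. -/
lemma minorIdeal_transfer {b c : ℕ} {n n' : Type*} [Fintype n] [Fintype n']
    [DecidableEq n] [DecidableEq n']
    (D : Matrix (Fin b) n R) (D' : Matrix (Fin c) n' R)
    (Q : Matrix (Fin b) (Fin c) R) (P : Matrix (Fin c) (Fin b) R)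
    (U : Matrix n n' R) (V : Matrix n (Fin b) R)
    (h1 : Q * P + D * V = 1) (h2 : Q * D' = D * U) (k : ℕ) :
    minorIdeal D' (c - k) ≤ minorIdeal D (b - k) := by
  rcases Nat.lt_or_ge b k with hk | hk
  · rw [Nat.sub_eq_zero_of_le hk.le, minorIdeal_zero]
    exact le_top
  have hE : Matrix.fromBlocks (1 : Matrix (Fin b) (Fin b) R) 0 0 D' =
      ((Matrix.fromBlocks 1 0 P 1 : Matrix (Fin b ⊕ Fin c) (Fin b ⊕ Fin c) R) *
        (Matrix.fromBlocks 1 (-Q) 0 1 : Matrix (Fin b ⊕ Fin c) (Fin b ⊕ Fin c) R)) *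
        Matrix.fromBlocks D 0 0 (1 : Matrix (Fin c) (Fin c) R) *
          Matrix.fromBlocks V U (-P) D' := by
    have e1 : ((Matrix.fromBlocks 1 (-Q) 0 1 : Matrix (Fin b ⊕ Fin c) (Fin b ⊕ Fin c) R) *
        Matrix.fromBlocks D 0 0 (1 : Matrix (Fin c) (Fin c) R)) *
          Matrix.fromBlocks V U (-P) D' = Matrix.fromBlocks 1 0 (-P) D' := by
      simp only [Matrix.fromBlocks_multiply]
      simp [h2]
      rw [add_comm, h1]
    rw [Matrix.mul_assoc (Matrix.fromBlocks 1 0 P 1), Matrix.mul_assoc (Matrix.fromBlocks 1 0 P 1),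
      e1, Matrix.fromBlocks_multiply]
    simp
  have hswap : Matrix.fromBlocks D' 0 0 (1 : Matrix (Fin b) (Fin b) R) =
      (Matrix.fromBlocks (1 : Matrix (Fin b) (Fin b) R) 0 0 D').submatrix Sum.swap Sum.swap := by
    simp
  calc minorIdeal D' (c - k)
      ≤ minorIdeal (Matrix.fromBlocks D' 0 0 (1 : Matrix (Fin b) (Fin b) R)) (c - k + b) :=
        le_minorIdeal_block _ _ _
    _ ≤ minorIdeal (Matrix.fromBlocks (1 : Matrix (Fin b) (Fin b) R) 0 0 D') (c - k + b) := by
        rw [hswap]; exact minorIdeal_submatrix _ _ _ _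
    _ ≤ minorIdeal (Matrix.fromBlocks (1 : Matrix (Fin b) (Fin b) R) 0 0 D') (b - k + c) :=
        minorIdeal_anti _ (by omega)
    _ ≤ minorIdeal (Matrix.fromBlocks D 0 0 (1 : Matrix (Fin c) (Fin c) R)) (b - k + c) := by
        rw [hE]
        exact (minorIdeal_mul_right _ _ _).trans (minorIdeal_mul_left _ _ _)
    _ ≤ minorIdeal D (b - k) := minorIdeal_block_le _ _ _

lemma minorIdeal_map {m n S : Type*} [CommRing S] (φ : R →+* S) (A : Matrix m n R) (k : ℕ) :
    minorIdeal (A.map φ) k = (minorIdeal A k).map φ := by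
  rw [minorIdeal, minorIdeal, Ideal.map_span, ← Set.range_comp]
  congr 2
  ext p
  simp [RingHom.map_det, Matrix.submatrix_map]


/-- Twisted transfer, over the ring itself. -/
lemma transfer_twisted {b c : ℕ} {n n' : Type*} [Fintype n] [Fintype n']
    [DecidableEq n] [DecidableEq n'] (s : R)
    (D : Matrix (Fin b) n R) (D' : Matrix (Fin c) n' R)
    (Q : Matrix (Fin b) (Fin c) R) (P : Matrix (Fin c) (Fin b) R)
    (U : Matrix n n' R) (V : Matrix n (Fin b) R)
    (h1 : Q * P + D * V = s • 1) (h2 : Q * D' = D * U) (k : ℕ)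
    (x : R) (hx : x ∈ minorIdeal D' (c - k)) :
    ∃ N : ℕ, s ^ N * x ∈ minorIdeal D (b - k) := by
  let S := Localization.Away s
  let φ : R →+* S := algebraMap R S
  obtain ⟨u, hu⟩ : IsUnit (φ s) := IsLocalization.Away.algebraMap_isUnit s
  have key := minorIdeal_transfer (D.map φ) (D'.map φ) (Q.map φ) ((↑u⁻¹ : S) • P.map φ)
    (U.map φ) ((↑u⁻¹ : S) • V.map φ) (by
      rw [Matrix.mul_smul, Matrix.mul_smul, ← smul_add, ← Matrix.map_mul, ← Matrix.map_mul,
        ← Matrix.map_add _ (map_add φ), h1]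
      ext i j
      simp only [Matrix.smul_apply, Matrix.map_apply, smul_eq_mul, map_mul, ← hu]
      rw [← mul_assoc, Units.inv_mul, one_mul]
      simp [Matrix.one_apply, apply_ite φ]) (by
      rw [← Matrix.map_mul, ← Matrix.map_mul, h2]) k
  rw [minorIdeal_map, minorIdeal_map] at key
  have := key (Ideal.mem_map_of_mem φ hx)
  rw [IsLocalization.algebraMap_mem_map_algebraMap_iff (Submonoid.powers s)] at this
  obtain ⟨_, ⟨N, rfl⟩, h⟩ := this
  exact ⟨N, h⟩

lemma smul_mem_minorIdeal {m n : Type*} (A : Matrix m n R) (s : R) (k : ℕ) (x : R)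
    (hx : x ∈ minorIdeal A k) : s ^ k * x ∈ minorIdeal (s • A) k := by
  refine Submodule.span_induction ?_ ?_ ?_ ?_ hx
  · rintro _ ⟨p, rfl⟩
    have := det_mem (s • A) p.1 p.2
    rwa [Matrix.submatrix_smul, Pi.smul_apply, Pi.smul_apply, Matrix.det_smul, Fintype.card_fin] at this
  · simp
  · intro x y _ _ hx hy
    rw [mul_add]
    exact Ideal.add_mem _ hx hy
  · intro a x _ hx
    rw [smul_eq_mul, mul_left_comm]
    exact Ideal.mul_mem_left _ _ hx

lemma exists_lift {M' : Type*} [AddCommGroup M'] [Module R M'] {b c : ℕ}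
    (g : (Fin b → R) →ₗ[R] M') (hg : Function.Surjective g) (h : (Fin c → R) →ₗ[R] M') :
    ∃ Q : Matrix (Fin b) (Fin c) R, ∀ z, g (Q *ᵥ z) = h z := by
  obtain ⟨h', hh'⟩ := Module.projective_lifting_property g h hg
  refine ⟨LinearMap.toMatrix' h', fun z => ?_⟩
  rw [← hh', LinearMap.comp_apply, ← Matrix.toLin'_apply, Matrix.toLin'_toMatrix']

lemma exists_factor {b c n : ℕ} (D : Matrix (Fin b) (Fin n) R) (Y : Matrix (Fin b) (Fin c) R)
    (h : ∀ z, Y *ᵥ z ∈ LinearMap.range (Matrix.toLin' D)) :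
    ∃ U : Matrix (Fin n) (Fin c) R, Y = D * U := by
  obtain ⟨U, hU⟩ := exists_lift (Matrix.toLin' D).rangeRestrict
    (LinearMap.surjective_rangeRestrict _)
    ((Matrix.toLin' Y).codRestrict (LinearMap.range (Matrix.toLin' D)) (fun z => by
      rw [Matrix.toLin'_apply]; exact h z))
  refine ⟨U, ?_⟩
  apply Matrix.toLin'.injective
  refine LinearMap.ext fun z => ?_
  have := congrArg Subtype.val (hU z)
  change (Matrix.toLin' D) (U *ᵥ z) = (Matrix.toLin' Y) z at this
  rw [Matrix.toLin'_mul, LinearMap.comp_apply, ← this, Matrix.toLin'_apply U]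

lemma local_main [IsDomain R] {M : Type*} [AddCommGroup M] [Module R M]
    {b b' : ℕ} (D : Matrix (Fin b) (Fin b') R)
    (g : (Fin b → R) →ₗ[R] M) (hg : Function.Surjective g)
    (hexact : LinearMap.ker g = LinearMap.range (Matrix.toLin' D))
    {bT bT' : ℕ} (DT : Matrix (Fin bT) (Fin bT') R)
    (gT : (Fin bT → R) →ₗ[R] (Submodule.torsion R M))
    (hgT : Function.Surjective gT)
    (hexactT : LinearMap.ker gT = LinearMap.range (Matrix.toLin' DT))
    {ρ : ℕ} (e : Fin ρ → Fin b) (f : Fin ρ → Fin b')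
    (hdet : (D.submatrix e f).det ≠ 0) (s : R) (C : Matrix (Fin b) (Fin ρ) R)
    (hC1 : C.submatrix e id = s • 1) (hC2 : s • D = C * D.submatrix e id) (k : ℕ) :
    (∀ x ∈ minorIdeal D (ρ - k), ∃ N : ℕ, s ^ N * x ∈ minorIdeal DT (bT - k)) ∧
    (∀ x ∈ minorIdeal DT (bT - k), ∃ N : ℕ, s ^ N * x ∈ minorIdeal D (ρ - k)) := by
  have hgD : ∀ y, g (D *ᵥ y) = 0 := fun y => by
    have : D *ᵥ y ∈ LinearMap.ker g := by
      rw [hexact]; exact ⟨y, by rw [Matrix.toLin'_apply]⟩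
    exact this
  have hker : ∀ x, g x = 0 → x ∈ LinearMap.range (Matrix.toLin' D) := fun x hx => by
    rw [← hexact]; exact hx
  have hgDT : ∀ y, gT (DT *ᵥ y) = 0 := fun y => by
    have : DT *ᵥ y ∈ LinearMap.ker gT := by
      rw [hexactT]; exact ⟨y, by rw [Matrix.toLin'_apply]⟩
    exact this
  have hkerT : ∀ x, gT x = 0 → x ∈ LinearMap.range (Matrix.toLin' DT) := fun x hx => by
    rw [← hexactT]; exact hx
  set D1 := D.submatrix e id with hD1
  have hrow : ∀ {n : ℕ} (Y : Matrix (Fin b') (Fin n) R),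
      (D * Y).submatrix e id = D1 * Y := fun Y => by
    ext i j; simp [Matrix.mul_apply, hD1]
  have hCD : ∀ y, C *ᵥ (D1 *ᵥ y) = s • (D *ᵥ y) := fun y => by
    rw [Matrix.mulVec_mulVec, ← hC2, Matrix.smul_mulVec]
  -- torsion elements
  have htors : ∀ x, g x ∈ Submodule.torsion R M → s • x = C *ᵥ (x ∘ e) := by
    intro x hx
    rw [Submodule.mem_torsion_iff] at hx
    obtain ⟨a, ha⟩ := hx
    have ha0 : (a : R) ≠ 0 := nonZeroDivisors.ne_zero a.2
    have ha' : (a : R) • g x = 0 := ha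
    obtain ⟨y, hy⟩ := hker ((a : R) • x) (by rw [map_smul, ha'])
    rw [Matrix.toLin'_apply] at hy
    have h1 : D1 *ᵥ y = (a : R) • (x ∘ e) := by
      ext i
      have := congrFun hy (e i)
      simpa [hD1, Matrix.mulVec, dotProduct] using this
    have h2 := hCD y
    rw [h1, hy, Matrix.mulVec_smul, smul_comm] at h2
    exact (smul_right_injective _ ha0 h2).symm
  obtain ⟨Q0, hQ0⟩ := exists_lift g hg ((Submodule.torsion R M).subtype ∘ₗ gT)
  have hQ0' : ∀ z, g (Q0 *ᵥ z) = (gT z : M) := hQ0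
  set Q := Q0.submatrix e id with hQ
  have hCQ : ∀ z, C *ᵥ (Q *ᵥ z) = s • (Q0 *ᵥ z) := fun z => by
    rw [htors (Q0 *ᵥ z) (by rw [hQ0']; exact (gT z).2)]
    congr 1
  obtain ⟨U, hU⟩ := exists_factor D (Q0 * DT) (fun z => hker _ (by
    rw [← Matrix.mulVec_mulVec, hQ0', hgDT]; rfl))
  have hU' : Q * DT = D1 * U := by
    rw [← hrow, ← hU]
    ext i j; simp [Matrix.mul_apply, hQ]
  have hCt : ∀ z, g (C *ᵥ z) ∈ Submodule.torsion R M := by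
    intro z
    rw [Submodule.mem_torsion_iff]
    refine ⟨⟨(D.submatrix e f).det, mem_nonZeroDivisors_of_ne_zero hdet⟩, ?_⟩
    change (D.submatrix e f).det • g (C *ᵥ z) = 0
    set F := (1 : Matrix (Fin b') (Fin b') R).submatrix id f with hF
    have h1 : D1 * F = D.submatrix e f := by
      ext i j; simp [Matrix.mul_apply, hD1, hF, Matrix.one_apply]
    have h2 : (D.submatrix e f).det • z =
        D1 *ᵥ (F *ᵥ ((D.submatrix e f).adjugate *ᵥ z)) := by
      rw [Matrix.mulVec_mulVec, h1, Matrix.mulVec_mulVec, Matrix.mul_adjugate,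
        Matrix.smul_mulVec, Matrix.one_mulVec]
    rw [← map_smul, ← Matrix.mulVec_smul, h2, hCD, map_smul, hgD, smul_zero]
  obtain ⟨P, hP⟩ := exists_lift gT hgT
    ((g ∘ₗ Matrix.toLin' C).codRestrict (Submodule.torsion R M) (fun z => by
      rw [LinearMap.comp_apply, Matrix.toLin'_apply]; exact hCt z))
  have hP' : ∀ z, (gT (P *ᵥ z) : M) = g (C *ᵥ z) := fun z => by
    rw [hP]; simp
  obtain ⟨V, hV⟩ := exists_factor D (C - Q0 * P) (fun z => hker _ (by
    rw [Matrix.sub_mulVec, map_sub, ← Matrix.mulVec_mulVec, hQ0', hP', sub_self]))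
  have hV' : Q * P + D1 * V = s • 1 := by
    rw [← hrow, ← hV, ← hC1]
    ext i j; simp [Matrix.mul_apply, hQ]
  obtain ⟨W, hW⟩ := exists_factor DT (P * D1) (fun z => hkerT _ (by
    apply Subtype.ext
    rw [← Matrix.mulVec_mulVec, hP', hCD, map_smul, hgD, smul_zero]; rfl))
  obtain ⟨Z, hZ⟩ := exists_factor DT (s • 1 - P * Q) (fun z => hkerT _ (by
    apply Subtype.ext
    rw [Matrix.sub_mulVec, map_sub, ← Matrix.mulVec_mulVec, Matrix.smul_mulVec,
      Matrix.one_mulVec, map_smul, Submodule.coe_sub, Submodule.coe_smul, hP', hCQ, map_smul,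
      hQ0', sub_self]; rfl))
  have hZ' : P * Q + DT * Z = s • 1 := by rw [← hZ]; abel
  constructor
  · intro x hx
    have h1 := smul_mem_minorIdeal D s _ x hx
    rw [hC2] at h1
    have h2 := minorIdeal_mul_left _ _ _ h1
    obtain ⟨N, hN⟩ := transfer_twisted s DT D1 P Q W Z hZ' hW k _ h2
    exact ⟨N + (ρ - k), by rwa [pow_add, mul_assoc]⟩
  · intro x hx
    obtain ⟨N, hN⟩ := transfer_twisted s D1 DT Q P U V hV' hU' k _ hx
    exact ⟨N, minorIdeal_submatrix _ _ _ _ hN⟩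

lemma exists_li_rows {K : Type*} [Field K] {m n : Type*} [Fintype m] [Fintype n]
    (A : Matrix m n K) {ρ : ℕ} (h : A.rank = ρ) :
    ∃ e : Fin ρ → m, LinearIndependent K (fun i => A (e i)) := by
  classical
  obtain ⟨t, ht, hspan, hli⟩ := exists_linearIndependent K (Set.range A.row)
  have hfin : t.Finite := (Set.finite_range _).subset ht
  have := hfin.fintype
  have hcard : Fintype.card t = ρ := by
    rw [← h, Matrix.rank_eq_finrank_span_row, ← hspan]
    have := finrank_span_eq_card hli
    rw [← this, Subtype.range_coe]
  have hc : ∀ v : t, ∃ i, A.row i = v := fun v => ht v.2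
  choose e he using hc
  let eq := (Fintype.equivFinOfCardEq hcard).symm
  refine ⟨fun i => e (eq i), ?_⟩
  have h2 : (fun i => A (e (eq i))) = (fun v : t => (v : n → K)) ∘ eq := by
    funext i
    exact he (eq i)
  rw [h2]
  exact hli.comp _ eq.injective

lemma exists_minor_ne_zero {K : Type*} [Field K] {m n : Type*} [Fintype m] [Fintype n]
    (A : Matrix m n K) {ρ : ℕ} (h : A.rank = ρ) :
    ∃ (e : Fin ρ → m) (f : Fin ρ → n), (A.submatrix e f).det ≠ 0 := by
  obtain ⟨e, he⟩ := exists_li_rows A h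
  have h1 : (A.submatrix e id).rank = ρ := by
    have := LinearIndependent.rank_matrix (M := A.submatrix e id) he
    simpa using this
  rw [← Matrix.rank_transpose] at h1
  obtain ⟨f, hf⟩ := exists_li_rows _ h1
  refine ⟨e, f, ?_⟩
  rw [← Matrix.det_transpose]
  have hu : IsUnit (A.submatrix e f)ᵀ := Matrix.linearIndependent_rows_iff_isUnit.1 hf
  exact ((Matrix.isUnit_iff_isUnit_det _).1 hu).ne_zero

lemma exists_row_factor {K : Type*} [Field K] {m n : Type*} [Fintype m] [Fintype n]
    (A : Matrix m n K) {ρ : ℕ} (h : A.rank = ρ) (e : Fin ρ → m) (f : Fin ρ → n)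
    (hdet : (A.submatrix e f).det ≠ 0) :
    ∃ X : Matrix m (Fin ρ) K, A = X * A.submatrix e id := by
  have h1 : ρ ≤ (A.submatrix e id).rank := by
    have h2 := Matrix.rank_of_det_ne_zero hdet
    have h3 : ((A.submatrix e id).submatrix id f).rank ≤ (A.submatrix e id).rank :=
      Matrix.rank_submatrix_le _ _ _
    rw [Matrix.submatrix_submatrix] at h3
    simpa [h2] using h3
  have hle : Submodule.span K (Set.range (A.submatrix e id).row) ≤
      Submodule.span K (Set.range A.row) := by
    refine Submodule.span_mono ?_
    rintro _ ⟨i, rfl⟩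
    exact ⟨e i, rfl⟩
  have heq := Submodule.eq_of_le_of_finrank_le hle (by
    rw [← Matrix.rank_eq_finrank_span_row, ← Matrix.rank_eq_finrank_span_row, h]; exact h1)
  have hx : ∀ k, ∃ c : Fin ρ → K, ∑ i, c i • (A.submatrix e id).row i = A.row k := fun k => by
    rw [← Submodule.mem_span_range_iff_exists_fun, heq]
    exact Submodule.subset_span ⟨k, rfl⟩
  choose X hX using hx
  refine ⟨Matrix.of X, ?_⟩
  ext k c
  have := congrFun (hX k) c
  simp only [Finset.sum_apply, Pi.smul_apply, Matrix.row_apply, smul_eq_mul] at this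
  rw [Matrix.mul_apply]
  exact this.symm

/-- rank is unchanged by passing to the fraction field -/
lemma rank_map_fraction [IsDomain R] {b b' : ℕ} (D : Matrix (Fin b) (Fin b') R) :
    (D.map (algebraMap R (FractionRing R))).rank = D.rank := by
  set K := FractionRing R
  have hinj : Function.Injective (algebraMap R K) := IsFractionRing.injective R K
  apply le_antisymm
  · obtain ⟨e, f, hef⟩ := exists_minor_ne_zero (D.map (algebraMap R K)) rfl
    have h1 : (D.submatrix e f).det ≠ 0 := by
      intro h0
      apply hef
      rw [Matrix.submatrix_map, ← RingHom.mapMatrix_apply, ← RingHom.map_det, h0, map_zero]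
    have h2 := Matrix.rank_of_det_ne_zero h1
    rw [Fintype.card_fin] at h2
    rw [← h2]
    exact Matrix.rank_submatrix_le _ _ _
  · obtain ⟨v, hv⟩ := exists_linearIndependent_of_le_finrank
      (R := R) (M := LinearMap.range D.mulVecLin) (n := D.rank) le_rfl
    let L : (Fin b → R) →ₗ[R] (Fin b → K) := (Algebra.linearMap R K).compLeft (Fin b)
    have hL : Function.Injective L := fun x y hxy => by
      funext i
      exact hinj (congrFun hxy i)
    have hli : LinearIndependent R (fun i => L (v i : Fin b → R)) := by
      have h1 := hv.map' (LinearMap.range D.mulVecLin).subtype (by simp)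
      have h2 := h1.map' L (LinearMap.ker_eq_bot.2 hL)
      exact h2
    rw [LinearIndependent.iff_fractionRing (R := R) (K := K)] at hli
    have hmem : ∀ i, L (v i : Fin b → R) ∈
        LinearMap.range (D.map (algebraMap R K)).mulVecLin := by
      intro i
      obtain ⟨y, hy⟩ := (v i).2
      refine ⟨fun j => algebraMap R K (y j), ?_⟩
      rw [← hy]
      funext k
      simp [L, Matrix.mulVec, dotProduct]
    have hli2 : LinearIndependent K (fun i =>
        (⟨L (v i), hmem i⟩ : LinearMap.range (D.map (algebraMap R K)).mulVecLin)) :=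
      LinearIndependent.of_comp (LinearMap.range (D.map (algebraMap R K)).mulVecLin).subtype hli
    have := hli2.fintype_card_le_finrank
    rwa [Fintype.card_fin] at this

lemma cramer_factor [IsDomain R] {b b' ρ : ℕ} (D : Matrix (Fin b) (Fin b') R) (hρ : D.rank = ρ)
    (e : Fin ρ → Fin b) (f : Fin ρ → Fin b') (hdet : (D.submatrix e f).det ≠ 0) :
    (D.submatrix e f).det • D =
      (D.submatrix id f * (D.submatrix e f).adjugate) * D.submatrix e id := by
  have hinj : Function.Injective (algebraMap R (FractionRing R)) := IsFractionRing.injective R _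
  let φ := algebraMap R (FractionRing R)
  have hd : ((D.map φ).submatrix e f).det = φ (D.submatrix e f).det := by
    rw [RingHom.map_det, RingHom.mapMatrix_apply, Matrix.submatrix_map]
  obtain ⟨X, hX⟩ := exists_row_factor (D.map φ) ((rank_map_fraction D).trans hρ) e f (by
    rw [hd]; exact (map_ne_zero_iff φ hinj).2 hdet)
  have hXJ : (D.map φ).submatrix id f = X * (D.map φ).submatrix e f := by
    conv_lhs => rw [hX]
    ext i j; simp [Matrix.mul_apply]
  have key : ((D.map φ).submatrix e f).det • D.map φ =
      ((D.map φ).submatrix id f * ((D.map φ).submatrix e f).adjugate) *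
        (D.map φ).submatrix e id := by
    rw [hXJ, Matrix.mul_assoc X, Matrix.mul_adjugate, Matrix.mul_smul, Matrix.mul_one,
      Matrix.smul_mul, ← hX]
  apply Matrix.map_injective hinj
  change ((D.submatrix e f).det • D).map φ = (_ : Matrix _ _ R).map φ
  rw [Matrix.map_mul, Matrix.map_mul, ← RingHom.mapMatrix_apply φ (Matrix.adjugate _),
    RingHom.map_adjugate, RingHom.mapMatrix_apply, ← Matrix.submatrix_map,
    ← Matrix.submatrix_map, ← Matrix.submatrix_map, ← key, hd]
  ext i j
  simp

lemma cramer_entry {b b' ρ : ℕ} (D : Matrix (Fin b) (Fin b') R)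
    (e : Fin ρ → Fin b) (f : Fin ρ → Fin b') (k : Fin b) (i : Fin ρ) :
    (D.submatrix id f * (D.submatrix e f).adjugate) k i ∈ minorIdeal D ρ := by
  have h : (D.submatrix id f * (D.submatrix e f).adjugate) k i =
      (D.submatrix (Function.update e i k) f).det := by
    have h1 : D.submatrix (Function.update e i k) f =
        (D.submatrix e f).updateRow i (fun c => D k (f c)) := by
      ext a c
      by_cases ha : a = i
      · subst ha; simp
      · simp [ha]
    rw [h1, ← Matrix.cramer_transpose_apply, Matrix.cramer_eq_adjugate_mulVec,
      ← Matrix.adjugate_transpose, Matrix.mulVec_transpose]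
    rfl
  rw [h]
  exact det_mem _ _ _

section gcd
variable [IsDomain R] [NormalizedGCDMonoid R]

lemma dvd_delta {b b' : ℕ} (A : Matrix (Fin b) (Fin b') R) (j : ℕ) (c : R) :
    c ∣ deltaGCD A j ↔ ∀ x ∈ minorIdeal A (b - j), c ∣ x := by
  rw [deltaGCD, Finset.dvd_gcd_iff]
  constructor
  · intro h x hx
    rw [← Ideal.mem_span_singleton]
    refine minorIdeal_le (fun e f => ?_) hx
    rw [Ideal.mem_span_singleton]
    by_cases he : Function.Injective e
    · by_cases hf : Function.Injective f
      · exact h (⟨e, he⟩, ⟨f, hf⟩) (Finset.mem_univ _)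
      · simp only [Function.Injective] at hf
        push Not at hf
        obtain ⟨i, i', hi, hne⟩ := hf
        rw [Matrix.det_zero_of_column_eq hne (fun a => by simp [hi])]
        exact dvd_zero _
    · simp only [Function.Injective] at he
      push Not at he
      obtain ⟨i, i', hi, hne⟩ := he
      rw [Matrix.det_zero_of_row_eq hne (by ext a; simp [hi])]
      exact dvd_zero _
  · intro h p _
    exact h _ (det_mem _ _ _)

lemma dvd_of_pow {ι : Type*} (S : Finset ι) (s : ι → R) (a x : R)
    (h : ∀ i ∈ S, ∃ N : ℕ, a ∣ s i ^ N * x) : ∃ N : ℕ, a ∣ (S.gcd s) ^ N * x := by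
  classical
  induction S using Finset.induction_on with
  | empty => exact ⟨1, by simp⟩
  | insert i S hi ih =>
    obtain ⟨n, hn⟩ := h i (Finset.mem_insert_self _ _)
    obtain ⟨m, hm⟩ := ih fun j hj => h j (Finset.mem_insert_of_mem hj)
    refine ⟨m * n, ?_⟩
    rw [Finset.gcd_insert]
    have h1 : a ∣ gcd (s i ^ n) (S.gcd s ^ m) * x :=
      (dvd_gcd hn hm).trans (gcd_mul_right' x _ _).dvd
    refine h1.trans (mul_dvd_mul_right ?_ _)
    calc gcd (s i ^ n) (S.gcd s ^ m) ∣ gcd (s i) (S.gcd s ^ m) ^ n := gcd_pow_left_dvd_pow_gcd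
      _ ∣ (gcd (s i) (S.gcd s) ^ m) ^ n := pow_dvd_pow_of_dvd gcd_pow_right_dvd_pow_gcd n
      _ = _ := by rw [← pow_mul]

end gcd

lemma rank_add [IsDomain R] {M : Type*} [AddCommGroup M] [Module R M]
    {b b' : ℕ} (D : Matrix (Fin b) (Fin b') R)
    (g : (Fin b → R) →ₗ[R] M) (hg : Function.Surjective g)
    (hexact : LinearMap.ker g = LinearMap.range (Matrix.toLin' D))
    (r : ℕ) (hr : Module.rank (FractionRing R) (FractionRing R ⊗[R] M) = r) :
    r + D.rank = b := by
  have h1 : Module.finrank R M = r := by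
    rw [← (TensorProduct.isBaseChange R M (FractionRing R)).finrank_eq]
    exact Module.finrank_eq_of_rank_eq hr
  have h2 : Module.finrank R ((Fin b → R) ⧸ LinearMap.ker g) = r := by
    rw [← h1]
    exact (g.quotKerEquivOfSurjective hg).finrank_eq
  have h3 := rank_quotient_add_rank_of_isDomain (LinearMap.ker g)
  have h5 : Module.rank R (Fin b → R) = (b : Cardinal) := by simp
  rw [h5] at h3
  have hb : Module.rank R (LinearMap.ker g) < Cardinal.aleph0 :=
    (le_add_self.trans h3.le).trans_lt (Cardinal.natCast_lt_aleph0)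
  have ha : Module.rank R ((Fin b → R) ⧸ LinearMap.ker g) < Cardinal.aleph0 :=
    (le_self_add.trans h3.le).trans_lt (Cardinal.natCast_lt_aleph0)
  have h4 := congrArg Cardinal.toNat h3
  rw [Cardinal.toNat_add ha hb, Cardinal.toNat_natCast] at h4
  change Module.finrank R _ + Module.finrank R (LinearMap.ker g) = b at h4
  rw [h2, hexact] at h4
  exact h4

end FitAux

/-- let `M` be a finitely generated module of rank `r` over the GCD
domain `R` (standing for `ℤ[t,t⁻¹]`), i.e. `dim_{Frac R} (M ⊗ Frac R) = r`,
presented by `R^{b'} --D--> R^b → M → 0`, and let the torsion submodule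
`Tor(M) = {x ∈ M : f • x = 0 for some f ≠ 0}` be presented by
`R^{bT'} --DT--> R^{bT} → Tor(M) → 0`.  Then `Δ^j(M) = 0` for `j < r` and
`Δ^j(M) = Δ^{j-r}(Tor M)` for `j ≥ r`. -/
theorem deltaGCD_rank_torsion {R : Type*} [CommRing R] [IsDomain R]
    [NormalizedGCDMonoid R] {M : Type*} [AddCommGroup M] [Module R M]
    (b b' : ℕ) (D : Matrix (Fin b) (Fin b') R)
    (g : (Fin b → R) →ₗ[R] M) (hg : Function.Surjective g)
    (hexact : LinearMap.ker g = LinearMap.range (Matrix.toLin' D))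
    (bT bT' : ℕ) (DT : Matrix (Fin bT) (Fin bT') R)
    (gT : (Fin bT → R) →ₗ[R] (Submodule.torsion R M))
    (hgT : Function.Surjective gT)
    (hexactT : LinearMap.ker gT = LinearMap.range (Matrix.toLin' DT))
    (r : ℕ) (hr : Module.rank (FractionRing R) (FractionRing R ⊗[R] M) = r) :
    (∀ j : ℕ, j < r → deltaGCD D j = 0) ∧
      (∀ j : ℕ, r ≤ j → deltaGCD D j = deltaGCD DT (j - r)) := by
  have hrank := FitAux.rank_add D g hg hexact r hr
  constructor
  · intro j hj
    rw [deltaGCD, Finset.gcd_eq_zero_iff]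
    intro p _
    by_contra hne
    have h1 := Matrix.rank_of_det_ne_zero hne
    have h2 : (D.submatrix p.1 p.2).rank ≤ D.rank := Matrix.rank_submatrix_le _ _ _
    rw [h1, Fintype.card_fin] at h2
    omega
  · intro j hj
    obtain ⟨ρ, hρ⟩ : ∃ ρ, D.rank = ρ := ⟨_, rfl⟩
    have hbr : b - r = ρ := by omega
    -- a nonzero maximal minor
    obtain ⟨e0, f0, h0⟩ := FitAux.exists_minor_ne_zero
      (D.map (algebraMap R (FractionRing R))) (FitAux.rank_map_fraction D)
    have hd0 : deltaGCD D r ≠ 0 := by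
      intro hz
      have h1 : (D.submatrix e0 f0).det = 0 := by
        have h2 := (FitAux.dvd_delta D r 0).1 (by rw [hz]) (D.submatrix e0 f0).det (by
          rw [hbr, ← hρ]; exact FitAux.det_mem _ _ _)
        exact zero_dvd_iff.1 h2
      apply h0
      rw [Matrix.submatrix_map, ← RingHom.mapMatrix_apply, ← RingHom.map_det, h1, map_zero]
    have hdvd := (FitAux.dvd_delta D r (deltaGCD D r)).1 dvd_rfl
    obtain ⟨p0, -, hp0⟩ := Finset.gcd_ne_zero_iff.1 hd0
    obtain ⟨σ, hσ, hσ1⟩ := Finset.extract_gcd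
      (s := (Finset.univ : Finset ((Fin (b - r) ↪ Fin b) × (Fin (b - r) ↪ Fin b'))))
      (fun p : (Fin (b - r) ↪ Fin b) × (Fin (b - r) ↪ Fin b') => (D.submatrix (⇑p.1) (⇑p.2)).det) ⟨p0, Finset.mem_univ _⟩
    have hσ' : ∀ p : (Fin (b - r) ↪ Fin b) × (Fin (b - r) ↪ Fin b'), (D.submatrix (⇑p.1) (⇑p.2)).det = deltaGCD D r * σ p :=
      fun p => hσ p (Finset.mem_univ _)
    have hrank' : D.rank = b - r := by omega
    have hloc : ∀ p, σ p ≠ 0 →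
        (∀ x ∈ FitAux.minorIdeal D (b - r - (j - r)), ∃ N : ℕ,
          σ p ^ N * x ∈ FitAux.minorIdeal DT (bT - (j - r))) ∧
        (∀ x ∈ FitAux.minorIdeal DT (bT - (j - r)), ∃ N : ℕ,
          σ p ^ N * x ∈ FitAux.minorIdeal D (b - r - (j - r))) := by
      intro p hp
      have hdet : (D.submatrix p.1 p.2).det ≠ 0 := by
        rw [hσ']; exact mul_ne_zero hd0 hp
      have hC : ∀ k i, ∃ c, (D.submatrix id p.2 * (D.submatrix p.1 p.2).adjugate) k i =
          deltaGCD D r * c := fun k i => hdvd _ (FitAux.cramer_entry D p.1 p.2 k i)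
      choose C hC using hC
      have hC' : D.submatrix id p.2 * (D.submatrix p.1 p.2).adjugate =
          deltaGCD D r • Matrix.of C := by
        ext k i; rw [hC]; rfl
      refine FitAux.local_main D g hg hexact DT gT hgT hexactT p.1 p.2 hdet (σ p)
        (Matrix.of C) ?_ ?_ (j - r)
      · have h1 := Matrix.mul_adjugate (D.submatrix p.1 p.2)
        ext a c
        apply mul_left_cancel₀ hd0
        have h2 := congrFun (congrFun h1 a) c
        have h3 : (D.submatrix p.1 p.2 * (D.submatrix p.1 p.2).adjugate) a c =
            deltaGCD D r * C (p.1 a) c := by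
          rw [← hC]; rfl
        rw [h3, hσ'] at h2
        simpa [mul_assoc] using h2
      · have h1 := FitAux.cramer_factor D hrank' p.1 p.2 hdet
        rw [hC', hσ', Matrix.smul_mul, mul_smul] at h1
        exact smul_right_injective _ hd0 h1
    have hbj : b - r - (j - r) = b - j := by omega
    rw [hbj] at hloc
    have hfin : ∀ a x : R, (∀ p, σ p ≠ 0 → ∃ N : ℕ, a ∣ σ p ^ N * x) → a ∣ x := by
      intro a x h
      obtain ⟨N, hN⟩ := FitAux.dvd_of_pow Finset.univ σ a x (fun p _ => by
        by_cases hp : σ p = 0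
        · exact ⟨1, by simp [hp]⟩
        · exact h p hp)
      rwa [hσ1, one_pow, one_mul] at hN
    apply dvd_antisymm_of_normalize_eq Finset.normalize_gcd Finset.normalize_gcd
    · refine (FitAux.dvd_delta DT (j - r) _).2 fun x hx => hfin _ _ fun p hp => ?_
      obtain ⟨N, hN⟩ := (hloc p hp).2 x hx
      exact ⟨N, (FitAux.dvd_delta D j _).1 dvd_rfl _ hN⟩
    · refine (FitAux.dvd_delta D j _).2 fun x hx => hfin _ _ fun p hp => ?_
      obtain ⟨N, hN⟩ := (hloc p hp).1 x hx
      exact ⟨N, (FitAux.dvd_delta DT (j - r) _).1 dvd_rfl _ hN⟩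
end
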